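/- The ℏ^δ-average preserves the symbol class: if K_ℏ ∈ Ψ_δ^m and A_ℏ is defined via Fourier coefficients by Ã_ℏ(k,ξ) = χ(Ω_k(ξ)/(|k|ℏ^δ)) K̃_ℏ(k,ξ) for k ≠ 0 and Ã_ℏ(0,ξ) = K̃_ℏ(0,ξ), where χ ∈ C_0^∞(ℝ), then A_ℏ ∈ Ψ_δ^m. -/

import Mathlib

open scoped Real BigOperators
open MeasureTheory

noncomputable section

/-- Phase space `T^d × ℝ^d`, with the torus modelled by periodic functions on `ℝ^d`. -/
abbrev Vec (d : ℕ) := Fin d → ℝ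
abbrev Phase (d : ℕ) := Vec d × Vec d

/-- Directional derivative. -/
noncomputable def dirD {d : ℕ} (v : Phase d) (f : Phase d → ℂ) : Phase d → ℂ :=
  fun p => fderiv ℝ f p v

/-- Iterated partial derivatives `∂_x^α ∂_ξ^β`, with the multi-indices given as lists of
coordinate directions (`lx` in `x`, `lξ` in `ξ`). -/
noncomputable def mDeriv {d : ℕ} (lx lξ : List (Fin d)) (f : Phase d → ℂ) : Phase d → ℂ :=
  ((lx.map (fun i => ((Pi.single i 1, 0) : Phase d))
    ++ lξ.map (fun i => ((0, Pi.single i 1) : Phase d))).foldr dirD) f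

/-- The symbol class `Ψ_δ^m`: `|∂_x^α ∂_ξ^β P_ℏ(x,ξ)| ≤ C_{α,β} ℏ^{m-δ|β|}`. -/
def IsSymbol (d : ℕ) (δ m : ℝ) (P : ℝ → Phase d → ℂ) : Prop :=
  (∀ h ∈ Set.Ioc (0:ℝ) 1, ContDiff ℝ (⊤ : ℕ∞) (P h)) ∧
  ∀ lx lξ : List (Fin d), ∃ C > 0, ∀ h ∈ Set.Ioc (0:ℝ) 1, ∀ p : Phase d,
    ‖mDeriv lx lξ (P h) p‖ ≤ C * h ^ (m - δ * (lξ.length : ℝ))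

/-- `2π`-periodicity in the `x` variable. -/
def PeriodicX {d : ℕ} (f : Phase d → ℂ) : Prop :=
  ∀ (x ξ : Vec d) (k : Fin d → ℤ), f (x + fun i => 2 * Real.pi * (k i), ξ) = f (x, ξ)

/-- Fourier coefficient in the torus variable. -/
noncomputable def fCoeff {d : ℕ} (g : Vec d → ℂ) (k : Fin d → ℤ) : ℂ :=
  ((2 * Real.pi : ℂ) ^ d)⁻¹ *
    ∫ x in Set.Icc (0 : Vec d) (fun _ => 2 * Real.pi),
      Complex.exp (-(Complex.I * ((∑ i, (k i : ℝ) * x i : ℝ) : ℂ))) * g x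

/-- Directional derivative in `ξ` only. -/
noncomputable def dirDξ {d : ℕ} (i : Fin d) (g : Vec d → ℂ) : Vec d → ℂ :=
  fun ξ => fderiv ℝ g ξ (Pi.single i 1)

noncomputable def mDerivξ {d : ℕ} (l : List (Fin d)) (g : Vec d → ℂ) : Vec d → ℂ :=
  l.foldr dirDξ g

/-- Euclidean norm of an integer vector. -/
noncomputable def znorm {d : ℕ} (k : Fin d → ℤ) : ℝ := Real.sqrt (∑ i, ((k i : ℝ)) ^ 2)

/-- Real vector attached to `k ∈ ℤ^d`. -/
def zr {d : ℕ} (k : Fin d → ℤ) : Vec d := fun i => (k i : ℝ)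
open scoped Classical

/-- `Ω_X(ξ) = dH_ξ(X)`. -/
noncomputable def Om {d : ℕ} (H : Vec d → ℝ) (ξ X : Vec d) : ℝ := fderiv ℝ H ξ X

/-- All derivatives of `H` are (uniformly) bounded. -/
def BddDerivs {d : ℕ} (H : Vec d → ℝ) : Prop :=
  ∀ n : ℕ, ∃ C, ∀ ξ : Vec d, ‖iteratedFDeriv ℝ n H ξ‖ ≤ C

/-- Cut-off data: `χ ∈ C_0^∞(ℝ)` with values in `[0,1]`, symmetric, vanishing for
`|t| ≥ 1`, and with `χ − 1` flat at `0`. -/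
structure CutOff (χ : ℝ → ℝ) : Prop where
  smooth : ContDiff ℝ (⊤ : ℕ∞) χ
  mem01 : ∀ t, χ t ∈ Set.Icc (0:ℝ) 1
  symm : ∀ t, χ (-t) = χ t
  supp : ∀ t : ℝ, 1 ≤ |t| → χ t = 0
  flat : ∀ n : ℕ, iteratedDeriv n (fun t => χ t - 1) 0 = 0

/-- `A` is (a realization of) the `ℏ^δ`-average of `K`: a smooth periodic family whose
Fourier coefficients are `Ã_ℏ(k,ξ) = χ(Ω_k(ξ)/(|k|ℏ^δ)) K̃_ℏ(k,ξ)` for `k ≠ 0` and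
`Ã_ℏ(0,ξ) = K̃_ℏ(0,ξ)`. -/
def IsHAverage {d : ℕ} (H : Vec d → ℝ) (χ : ℝ → ℝ) (δ : ℝ)
    (K A : ℝ → Phase d → ℂ) : Prop :=
  (∀ h ∈ Set.Ioc (0:ℝ) 1, ContDiff ℝ (⊤ : ℕ∞) (A h)) ∧
  (∀ h ∈ Set.Ioc (0:ℝ) 1, PeriodicX (A h)) ∧
  ∀ h ∈ Set.Ioc (0:ℝ) 1, ∀ (k : Fin d → ℤ) (ξ : Vec d),
    fCoeff (fun x => A h (x, ξ)) k =
      if k = 0 then fCoeff (fun x => K h (x, ξ)) 0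
      else (χ (Om H ξ (zr k) / (znorm k * h ^ δ)) : ℂ) * fCoeff (fun x => K h (x, ξ)) k

/-!
A smooth function on `T^d × ℝ^d` is a symbol exactly when its Fourier coefficients in `x`, together
with their derivatives in `ξ`, decay faster than every power of `|k|`, with the same loss of
`h^{-δ}` per derivative: `∂_x` becomes multiplication by `i k`, and conversely the Fourier series
can be summed after spending `d + 1` powers of `|k|`. On the Fourier side the average is
multiplication by `ψ(k, ξ) = χ(Ω_k(ξ) / (|k| h^δ))`. Since `Ω_k(ξ)` is linear in `k`, the functions
`Ω_k(ξ) / |k|` have derivatives in `ξ` bounded uniformly in `k`, so each derivative of `ψ` costs at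
most `h^{-δ}`, and the Leibniz rule shows that multiplication by `ψ` preserves the decay.
-/

open scoped ContDiff

section Lattice

variable {ι : Type*} [Fintype ι]

lemma max_one_norm_pow_le_one_add_sum {G : Type*} [SeminormedAddCommGroup G] (k : ι → G)
    (N : ℕ) : max 1 ‖k‖ ^ N ≤ 1 + ∑ i, ‖k i‖ ^ N := by
  have sum_nonneg : 0 ≤ ∑ i, ‖k i‖ ^ N := by positivity
  rcases le_total ‖k‖ 1 with hk | hk
  · simpa only [max_eq_left hk, one_pow] using le_add_of_nonneg_right sum_nonneg
  · have : Nonempty ι := by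
      by_contra! h
      norm_num [Pi.norm_def] at hk
    obtain ⟨i, hi⟩ := Finite.exists_max fun i => ‖k i‖
    calc max 1 ‖k‖ ^ N ≤ ‖k i‖ ^ N := by
          rw [max_eq_right hk]
          gcongr
          exact (pi_norm_le_iff_of_nonneg (norm_nonneg _)).2 hi
      _ ≤ ∑ i, ‖k i‖ ^ N :=
          Finset.single_le_sum (f := fun i => ‖k i‖ ^ N) (fun _ _ => by positivity)
            (Finset.mem_univ i)
      _ ≤ 1 + ∑ i, ‖k i‖ ^ N := le_add_of_nonneg_left zero_le_one

lemma summable_inv_max_one_norm_pow {n : ℕ} (hn : Fintype.card ι < n) :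
    Summable fun k : ι → ℤ => (max 1 ‖k‖ ^ n)⁻¹ := by
  let b := Pi.basisFun ℝ ι
  have rank_lt : Module.finrank ℤ (Submodule.span ℤ (Set.range b)) < n := by
    rwa [ZLattice.rank ℝ, Module.finrank_fintype_fun_eq_card]
  let e := (b.restrictScalars ℤ).equivFun.symm
  have norm_e (k : ι → ℤ) : ‖e k‖ = ‖k‖ := by
    have coe_e : (e k : ι → ℝ) = fun i => (k i : ℝ) := by
      ext i
      simp [e, b, Module.Basis.equivFun_symm_apply, Module.Basis.restrictScalars_apply,
        Pi.single_apply]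
    rw [Submodule.coe_norm, coe_e]
    simp only [Pi.norm_def, ← norm_toNNReal, Int.norm_cast_real]
  have h := (ZLattice.summable_norm_pow_inv _ n rank_lt).comp_injective e.injective
  refine h.of_norm_bounded_eventually ?_
  filter_upwards [(Set.finite_singleton (0 : ι → ℤ)).compl_mem_cofinite] with k hk
  have : 0 < ‖k‖ := norm_pos_iff.2 hk
  rw [Function.comp, norm_e, inv_pow, Real.norm_of_nonneg (by positivity)]
  gcongr
  exact le_max_right _ _

end Lattice

lemma norm_continuousMultilinearMap_le_sum_single {ι κ E : Type*} [Fintype ι] [DecidableEq ι]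
    [Fintype κ] [DecidableEq κ] [NormedAddCommGroup E] [NormedSpace ℝ E]
    (M : ContinuousMultilinearMap ℝ (fun _ : κ => ι → ℝ) E) :
    ‖M‖ ≤ ∑ r : κ → ι, ‖M fun j => Pi.single (r j) 1‖ := by
  refine M.opNorm_le_bound (by positivity) fun v => ?_
  have expansion : M v = ∑ r : κ → ι, (∏ j, v j (r j)) • M fun j => Pi.single (r j) 1 := by
    conv_lhs => rw [funext fun j => pi_eq_sum_univ' (v j)]
    simp only [ContinuousMultilinearMap.map_sum, ContinuousMultilinearMap.map_smul_univ]
  rw [expansion, Finset.sum_mul]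
  refine (norm_sum_le _ _).trans (Finset.sum_le_sum fun r _ => ?_)
  rw [norm_smul, norm_prod, mul_comm]
  gcongr with j
  exact norm_le_pi_norm (v j) (r j)

section Calculus

variable {E F G E' : Type*} [NormedAddCommGroup E] [NormedSpace ℝ E] [NormedAddCommGroup F]
  [NormedSpace ℝ F] [NormedAddCommGroup G] [NormedSpace ℝ G]
  [NormedAddCommGroup E'] [NormedSpace ℝ E']

/-- `f` and all its derivatives are uniformly bounded: `BddDerivs` for maps between normed spaces.
As `iteratedFDeriv` is `0` where it does not exist, this says nothing about smoothness. -/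
def HasBoundedDerivs (f : E → F) : Prop :=
  ∀ n : ℕ, ∃ C, ∀ x, ‖iteratedFDeriv ℝ n f x‖ ≤ C

lemma HasBoundedDerivs.exists_forall_le {f : E → F} (hf : HasBoundedDerivs f) (n : ℕ) :
    ∃ C, 1 ≤ C ∧ ∀ i ≤ n, ∀ x, ‖iteratedFDeriv ℝ i f x‖ ≤ C := by
  choose C hC using hf
  obtain ⟨B, hB⟩ := ((Set.finite_Iic n).image C).bddAbove
  exact ⟨max 1 B, le_max_left _ _, fun i hi x =>
    (hC i x).trans ((hB ⟨i, hi, rfl⟩).trans (le_max_right _ _))⟩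

lemma HasBoundedDerivs.fderiv {f : E → F} (hf : HasBoundedDerivs f) :
    HasBoundedDerivs (fderiv ℝ f) := fun n => by
  simpa only [norm_iteratedFDeriv_fderiv] using hf (n + 1)

lemma HasBoundedDerivs.of_hasCompactSupport {f : E → F} (hf : ContDiff ℝ ∞ f)
    (hsupp : HasCompactSupport f) : HasBoundedDerivs f := fun n =>
  (hsupp.iteratedFDeriv n).exists_bound_of_continuous
    (hf.continuous_iteratedFDeriv (by exact_mod_cast le_top))

lemma exists_norm_iteratedFDeriv_comp_clm_comp_le {g : G → E'} {f : E → F}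
    (hg : ContDiff ℝ ∞ g) (hgb : HasBoundedDerivs g) (hf : ContDiff ℝ ∞ f)
    (hfb : HasBoundedDerivs f) (n : ℕ) :
    ∃ C, 0 ≤ C ∧ ∀ (L : F →L[ℝ] G) (r : ℝ), 1 ≤ r → ‖L‖ ≤ r → ∀ x,
      ‖iteratedFDeriv ℝ n (fun x => g (L (f x))) x‖ ≤ C * r ^ n := by
  obtain ⟨Cg, hCg1, hCg⟩ := hgb.exists_forall_le n
  obtain ⟨Cf, hCf1, hCf⟩ := hfb.exists_forall_le n
  refine ⟨n.factorial * Cg * Cf ^ n, by positivity, fun L r hr hL x => ?_⟩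
  have inner_bound (i : ℕ) (hi : 1 ≤ i) (hin : i ≤ n) :
      ‖iteratedFDeriv ℝ i (L ∘ f) x‖ ≤ (r * Cf) ^ i := by
    calc ‖iteratedFDeriv ℝ i (L ∘ f) x‖
        = ‖L.compContinuousMultilinearMap (iteratedFDeriv ℝ i f x)‖ := by
          rw [L.iteratedFDeriv_comp_left hf.contDiffAt (by exact_mod_cast le_top)]
      _ ≤ ‖L‖ * ‖iteratedFDeriv ℝ i f x‖ := L.norm_compContinuousMultilinearMap_le _
      _ ≤ r * Cf := by
          gcongr
          exact hCf i hin x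
      _ ≤ (r * Cf) ^ i := le_self_pow₀ (one_le_mul_of_one_le_of_one_le hr hCf1) (by lia)
  calc ‖iteratedFDeriv ℝ n (g ∘ (L ∘ f)) x‖ ≤ n.factorial * Cg * (r * Cf) ^ n :=
        norm_iteratedFDeriv_comp_le (N := ∞) hg (L.contDiff.comp hf) (by exact_mod_cast le_top) x
          (fun i hi => hCg i hi _) inner_bound
    _ = n.factorial * Cg * Cf ^ n * r ^ n := by ring

lemma hasFDerivAt_setIntegral_of_continuous {X : Type*} [TopologicalSpace X] [MeasurableSpace X]
    [OpensMeasurableSpace X] {μ : Measure X} [IsFiniteMeasureOnCompacts μ] {s : Set X}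
    (hs : IsCompact s) (hsm : MeasurableSet s) {f : X → E → F} {f' : X → E → E →L[ℝ] F}
    (hf : ∀ v, Continuous fun x => f x v) (hf' : Continuous fun p : X × E => f' p.1 p.2)
    (h : ∀ x v, HasFDerivAt (f x) (f' x v) v) (v : E) :
    HasFDerivAt (fun v => ∫ x in s, f x v ∂μ) (∫ x in s, f' x v ∂μ) v := by
  have hf'v : Continuous fun x => f' x v := by fun_prop
  obtain ⟨C, hC⟩ := hs.exists_bound_of_continuousOn hf'v.continuousOn
  have tube : s ×ˢ {v} ⊆ {p : X × E | ‖f' p.1 p.2‖ < C + 1} := by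
    rintro ⟨x, _⟩ ⟨hx, rfl⟩
    exact (hC x hx).trans_lt (lt_add_one C)
  obtain ⟨U, V, -, hV, hsU, hvV, hUV⟩ := generalized_tube_lemma hs isCompact_singleton
    (isOpen_lt hf'.norm continuous_const) tube
  have hf_int (w : E) : IntegrableOn (fun x => f x w) s μ :=
    (hf w).continuousOn.integrableOn_compact' hs hsm
  have hf'_int : IntegrableOn (fun x => f' x v) s μ :=
    hf'v.continuousOn.integrableOn_compact' hs hsm
  have f'_le : ∀ᵐ x ∂μ.restrict s, ∀ w ∈ V, ‖f' x w‖ ≤ C + 1 :=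
    (ae_restrict_iff' hsm).2 (ae_of_all _ fun x hx w hw =>
      (hUV (Set.mk_mem_prod (hsU hx) hw)).le)
  exact hasFDerivAt_integral_of_dominated_of_fderiv_le (hV.mem_nhds (hvV rfl))
    (F := fun v x => f x v) (F' := fun v x => f' x v)
    (Filter.Eventually.of_forall fun w => (hf_int w).aestronglyMeasurable) (hf_int v)
    hf'_int.aestronglyMeasurable f'_le (continuousOn_const.integrableOn_compact' hs hsm)
    (ae_of_all _ fun x w _ => h x w)

end Calculus

section Torus

open scoped Pointwise

variable {d : ℕ} {E : Type*}

/-- `2π`-periodicity in each coordinate; such functions on `ℝ^d` stand for functions on `T^d`. -/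
def IsTorusPeriodic (g : Vec d → E) : Prop :=
  ∀ (x : Vec d) (k : Fin d → ℤ), g (x + fun i => 2 * Real.pi * (k i)) = g x

lemma IsTorusPeriodic.comp_add_right {g : Vec d → E} (hg : IsTorusPeriodic g) (v : Vec d) :
    IsTorusPeriodic fun x => g (x + v) := fun x k => by
  simpa only [add_right_comm] using hg (x + v) k

/-- The covering map of `T^d = ℝ^d / 2πℤ^d`, rescaled because Mathlib's torus has period `1`. -/
def torusMk : C(Vec d, UnitAddTorus (Fin d)) where
  toFun x i := ((x i / (2 * Real.pi) : ℝ) : UnitAddCircle)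
  continuous_toFun := by
    refine continuous_pi fun i => (AddCircle.continuous_mk' 1).comp ?_
    fun_prop

lemma isQuotientMap_torusMk : Topology.IsQuotientMap (torusMk : Vec d → _) := by
  have : IsOpenQuotientMap
      (Pi.map fun (_ : Fin d) (y : ℝ) => ((y / (2 * Real.pi) : ℝ) : UnitAddCircle)) :=
    IsOpenQuotientMap.piMap fun _ => QuotientAddGroup.isOpenQuotientMap_mk.comp
      (Homeomorph.mulRight₀ _ (inv_ne_zero Real.two_pi_pos.ne')).isOpenQuotientMap
  exact this.isQuotientMap

lemma two_pi_smul_Icc_zero_one :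
    (2 * Real.pi) • Set.Icc (0 : Vec d) 1 = Set.Icc 0 fun _ => 2 * Real.pi := by
  ext x
  simp only [Set.mem_smul_set_iff_inv_smul_mem₀ Real.two_pi_pos.ne', Set.mem_Icc, Pi.le_def,
    Pi.zero_apply, Pi.one_apply, Pi.smul_apply, smul_eq_mul, inv_mul_le_iff₀ Real.two_pi_pos,
    mul_one, mul_nonneg_iff_of_pos_left (inv_pos.2 Real.two_pi_pos)]

lemma torusMk_add (x y : Vec d) : torusMk (x + y) = torusMk x + torusMk y := by
  funext i
  simp only [torusMk, ContinuousMap.coe_mk, Pi.add_apply, add_div, AddCircle.coe_add]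

lemma IsTorusPeriodic.factorsThrough_torusMk {g : Vec d → E} (hg : IsTorusPeriodic g) :
    Function.FactorsThrough g torusMk := by
  intro x y hxy
  have coord (i : Fin d) : ∃ n : ℤ, x i = y i + 2 * Real.pi * n := by
    obtain ⟨n, hn⟩ := AddSubgroup.mem_zmultiples_iff.1
      (QuotientAddGroup.eq_iff_sub_mem.1 (congrFun hxy i))
    refine ⟨n, ?_⟩
    rw [zsmul_eq_mul, mul_one, ← sub_div, eq_div_iff Real.two_pi_pos.ne'] at hn
    linarith
  choose n hn using coord
  rw [← hg y n]
  exact congrArg g (funext hn)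

variable [NormedAddCommGroup E]

/-- The invariant probability measure of the torus. Mathlib's Fourier theory on `UnitAddTorus`
integrates against it under the name `volume`, through an instance local to that theory. -/
abbrev torusHaar (d : ℕ) : Measure (UnitAddTorus (Fin d)) :=
  Measure.pi fun _ => AddCircle.haarAddCircle

/-- The function on the torus whose pull-back to `ℝ^d` is the given periodic function. -/
def torusLift (g : Vec d → E) (hgc : Continuous g) (hg : IsTorusPeriodic g) :
    C(UnitAddTorus (Fin d), E) :=
  isQuotientMap_torusMk.lift ⟨g, hgc⟩ hg.factorsThrough_torusMk

lemma torusLift_torusMk {g : Vec d → E} (hgc : Continuous g) (hg : IsTorusPeriodic g)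
    (x : Vec d) : torusLift g hgc hg (torusMk x) = g x :=
  DFunLike.congr_fun (isQuotientMap_torusMk.lift_comp ⟨g, hgc⟩ hg.factorsThrough_torusMk) x

variable [NormedSpace ℝ E]

lemma integral_torusLift {g : Vec d → E} (hgc : Continuous g) (hg : IsTorusPeriodic g) :
    ∫ t, torusLift g hgc hg t ∂torusHaar d =
      ((2 * Real.pi) ^ d)⁻¹ • ∫ x in Set.Icc (0 : Vec d) fun _ => 2 * Real.pi, g x := by
  have cube_ae_eq : {x : Vec d | ∀ i, x i ∈ Set.Ioc ((0 : Vec d) i) ((0 : Vec d) i + 1)}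
      =ᵐ[volume] Set.Icc (0 : Vec d) 1 := by
    rw [volume_pi]
    simpa only [Set.pi, Set.mem_univ, true_imp_iff, Pi.zero_apply, Pi.one_apply, zero_add] using
      Measure.univ_pi_Ioc_ae_eq_Icc (μ := fun _ : Fin d => volume) (f := (0 : Vec d)) (g := 1)
  have lift_mk (x : Vec d) :
      torusLift g hgc hg (fun i => (x i : UnitAddCircle)) = g ((2 * Real.pi) • x) := by
    rw [← torusLift_torusMk hgc hg]
    congr 1
    funext i
    simp [torusMk, mul_div_cancel_left₀ _ Real.two_pi_pos.ne']
  refine (UnitAddTorus.integral_preimage _ 0).trans ?_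
  rw [setIntegral_congr_set cube_ae_eq]
  simp only [lift_mk]
  rw [Measure.setIntegral_comp_smul_of_pos volume g _ Real.two_pi_pos, two_pi_smul_Icc_zero_one,
    Module.finrank_fintype_fun_eq_card, Fintype.card_fin]

lemma setIntegral_Icc_comp_add_right {g : Vec d → E} (hgc : Continuous g)
    (hg : IsTorusPeriodic g) (v : Vec d) :
    ∫ x in Set.Icc (0 : Vec d) fun _ => 2 * Real.pi, g (x + v) =
      ∫ x in Set.Icc (0 : Vec d) fun _ => 2 * Real.pi, g x := by
  have hgvc : Continuous fun x => g (x + v) := by fun_prop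
  have hgv := hg.comp_add_right v
  have lift_add (t : UnitAddTorus (Fin d)) :
      torusLift _ hgvc hgv t = torusLift g hgc hg (t + torusMk v) := by
    obtain ⟨x, rfl⟩ := isQuotientMap_torusMk.surjective t
    rw [← torusMk_add, torusLift_torusMk, torusLift_torusMk]
  have h : ∫ t, torusLift _ hgvc hgv t ∂torusHaar d = ∫ t, torusLift g hgc hg t ∂torusHaar d := by
    simp only [lift_add]
    exact integral_add_right_eq_self (fun t => torusLift g hgc hg t) (torusMk v)
  rw [integral_torusLift, integral_torusLift] at h
  exact smul_right_injective E (inv_ne_zero (pow_ne_zero d Real.two_pi_pos.ne')) h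

end Torus

section FourierCoefficients

variable {d : ℕ}

/-- The kernel `e^{-i⟨k, x⟩}` of the Fourier coefficient `fCoeff`. -/
def fourierKernel (k : Fin d → ℤ) (x : Vec d) : ℂ :=
  Complex.exp (-(Complex.I * ((∑ i, (k i : ℝ) * x i : ℝ) : ℂ)))

@[fun_prop]
lemma continuous_fourierKernel (k : Fin d → ℤ) : Continuous (fourierKernel k) := by
  unfold fourierKernel
  fun_prop

lemma norm_fourierKernel (k : Fin d → ℤ) (x : Vec d) : ‖fourierKernel k x‖ = 1 := by
  simp [fourierKernel, Complex.norm_exp]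

lemma fourierKernel_add (k : Fin d → ℤ) (x y : Vec d) :
    fourierKernel k (x + y) = fourierKernel k x * fourierKernel k y := by
  rw [fourierKernel, fourierKernel, fourierKernel, ← Complex.exp_add]
  simp only [Pi.add_apply, mul_add, Finset.sum_add_distrib]
  push_cast
  ring_nf

lemma mFourier_neg_torusMk (k : Fin d → ℤ) (x : Vec d) :
    UnitAddTorus.mFourier (-k) (torusMk x) = fourierKernel k x := by
  simp only [UnitAddTorus.mFourier, ContinuousMap.coe_mk, torusMk, fourier_coe_apply,
    ← Complex.exp_sum, fourierKernel]
  push_cast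
  rw [Finset.mul_sum, ← Finset.sum_neg_distrib]
  congr 1
  refine Finset.sum_congr rfl fun i _ => ?_
  have pi_ne_zero : (Real.pi : ℂ) ≠ 0 := Complex.ofReal_ne_zero.2 Real.pi_ne_zero
  rw [Pi.neg_apply, Int.cast_neg]
  field_simp

lemma isTorusPeriodic_fourierKernel (k : Fin d → ℤ) : IsTorusPeriodic (fourierKernel k) := by
  intro x n
  have mk_eq : torusMk (x + fun i => 2 * Real.pi * (n i)) = torusMk x := by
    funext i
    simp [torusMk, add_div, mul_div_cancel_left₀ _ Real.two_pi_pos.ne']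
  rw [← mFourier_neg_torusMk, mk_eq, mFourier_neg_torusMk]

lemma IsTorusPeriodic.fourierKernel_mul {g : Vec d → ℂ} (hg : IsTorusPeriodic g)
    (k : Fin d → ℤ) : IsTorusPeriodic fun x => fourierKernel k x * g x := fun x n => by
  simp only [isTorusPeriodic_fourierKernel k x n, hg x n]

lemma mFourierCoeff_torusLift {g : Vec d → ℂ} (hgc : Continuous g) (hg : IsTorusPeriodic g)
    (k : Fin d → ℤ) : UnitAddTorus.mFourierCoeff (torusLift g hgc hg) k = fCoeff g k := by
  have hkc : Continuous fun x => fourierKernel k x * g x := by fun_prop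
  have integrand_eq (t : UnitAddTorus (Fin d)) :
      UnitAddTorus.mFourier (-k) t • torusLift g hgc hg t =
        torusLift _ hkc (hg.fourierKernel_mul k) t := by
    obtain ⟨x, rfl⟩ := isQuotientMap_torusMk.surjective t
    rw [torusLift_torusMk, torusLift_torusMk, mFourier_neg_torusMk, smul_eq_mul]
  calc UnitAddTorus.mFourierCoeff (torusLift g hgc hg) k
      = ∫ t, torusLift _ hkc (hg.fourierKernel_mul k) t ∂torusHaar d :=
        integral_congr_ae (ae_of_all _ integrand_eq)
    _ = fCoeff g k := by
        rw [integral_torusLift, Complex.real_smul]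
        push_cast
        rfl

lemma norm_le_tsum_of_norm_fCoeff_le {g : Vec d → ℂ} (hgc : Continuous g)
    (hg : IsTorusPeriodic g) {B : (Fin d → ℤ) → ℝ} (hB : Summable B)
    (h : ∀ k, ‖fCoeff g k‖ ≤ B k) (x : Vec d) : ‖g x‖ ≤ ∑' k, B k := by
  have coeff_le (k : Fin d → ℤ) : ‖UnitAddTorus.mFourierCoeff (torusLift g hgc hg) k‖ ≤ B k := by
    rw [mFourierCoeff_torusLift]
    exact h k
  have series := UnitAddTorus.hasSum_mFourier_series_apply_of_summable
    (Summable.of_norm_bounded hB coeff_le) (torusMk x)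
  rw [torusLift_torusMk] at series
  rw [← series.tsum_eq]
  refine tsum_of_norm_bounded hB.hasSum fun k => ?_
  calc ‖_ • UnitAddTorus.mFourier k (torusMk x)‖
      ≤ ‖UnitAddTorus.mFourierCoeff (torusLift g hgc hg) k‖ * 1 := by
        rw [norm_smul]
        gcongr
        exact (ContinuousMap.norm_coe_le_norm _ _).trans UnitAddTorus.mFourier_norm.le
    _ ≤ B k := by simpa only [mul_one] using coeff_le k

lemma norm_fCoeff_le {g : Vec d → ℂ} {C : ℝ} (h : ∀ x, ‖g x‖ ≤ C) (k : Fin d → ℤ) :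
    ‖fCoeff g k‖ ≤ C := by
  have volume_box : volume.real (Set.Icc (0 : Vec d) fun _ => 2 * Real.pi) = (2 * Real.pi) ^ d := by
    rw [measureReal_def, Real.volume_Icc_pi_toReal (a := 0) fun _ => Real.two_pi_pos.le]
    simp
  have norm_integrand_le (x : Vec d) : ‖fourierKernel k x * g x‖ ≤ C := by
    rw [norm_mul, norm_fourierKernel, one_mul]
    exact h x
  calc ‖fCoeff g k‖
      = ((2 * Real.pi) ^ d)⁻¹ *
          ‖∫ x in Set.Icc (0 : Vec d) fun _ => 2 * Real.pi, fourierKernel k x * g x‖ := by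
        rw [fCoeff, norm_mul, norm_inv, norm_pow, norm_mul, Complex.norm_real,
          Complex.norm_ofNat, Real.norm_of_nonneg Real.pi_pos.le]
        rfl
    _ ≤ ((2 * Real.pi) ^ d)⁻¹ * (C * (2 * Real.pi) ^ d) := by
        gcongr
        rw [← volume_box]
        exact norm_setIntegral_le_of_norm_le_const isCompact_Icc.measure_lt_top
          fun x _ => norm_integrand_le x
    _ = C := by field_simp

lemma fCoeff_comp_add_right {g : Vec d → ℂ} (hgc : Continuous g) (hg : IsTorusPeriodic g)
    (k : Fin d → ℤ) (v : Vec d) :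
    fCoeff (fun x => g (x + v)) k = fourierKernel k (-v) * fCoeff g k := by
  have integrand_eq (x : Vec d) : fourierKernel k x * g (x + v) =
      fourierKernel k (-v) * (fourierKernel k (x + v) * g (x + v)) := by
    rw [← mul_assoc, ← fourierKernel_add, neg_add_cancel_comm_assoc]
  change _ * ∫ x in _, fourierKernel k x * g (x + v) =
    _ * (_ * ∫ x in _, fourierKernel k x * g x)
  simp only [integrand_eq]
  rw [integral_const_mul, setIntegral_Icc_comp_add_right (g := fun x => fourierKernel k x * g x)
    (by fun_prop) (hg.fourierKernel_mul k)]
  ring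

end FourierCoefficients

section SymbolDerivatives

variable {d : ℕ}

lemma contDiff_dirD {f : Phase d → ℂ} (hf : ContDiff ℝ ∞ f) (v : Phase d) :
    ContDiff ℝ ∞ (dirD v f) :=
  (hf.fderiv_right (by simp)).clm_apply contDiff_const

lemma periodicX_dirD {f : Phase d → ℂ} (hf : PeriodicX f) (v : Phase d) :
    PeriodicX (dirD v f) := by
  intro x ξ k
  let a : Phase d := (fun i => 2 * Real.pi * (k i), 0)
  have shift : (fun p => f (p + a)) = f := by
    funext ⟨y, η⟩
    simpa only [a, Prod.mk_add_mk, add_zero] using hf y η k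
  have h := fderiv_comp_add_right (𝕜 := ℝ) (f := f) (x := (x, ξ)) a
  rw [shift, Prod.mk_add_mk, add_zero] at h
  rw [dirD, dirD, h]

lemma contDiff_mDeriv {f : Phase d → ℂ} (hf : ContDiff ℝ ∞ f) (lx lξ : List (Fin d)) :
    ContDiff ℝ ∞ (mDeriv lx lξ f) :=
  List.foldrRecOn _ _ hf fun _ hg v _ => contDiff_dirD hg v

lemma periodicX_mDeriv {f : Phase d → ℂ} (hf : PeriodicX f) (lx lξ : List (Fin d)) :
    PeriodicX (mDeriv lx lξ f) :=
  List.foldrRecOn _ _ hf fun _ hg v _ => periodicX_dirD hg v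

lemma mDerivξ_ofFn {g : Vec d → ℂ} (hg : ContDiff ℝ ∞ g) {n : ℕ} (r : Fin n → Fin d)
    (ξ : Vec d) :
    mDerivξ (List.ofFn r) g ξ = iteratedFDeriv ℝ n g ξ fun j => Pi.single (r j) 1 := by
  induction n generalizing ξ with
  | zero => simp [mDerivξ]
  | succ n ih =>
    have hd : DifferentiableAt ℝ (iteratedFDeriv ℝ n g) ξ :=
      (hg.differentiable_iteratedFDeriv (by exact_mod_cast ENat.natCast_lt_top n)).differentiableAt
    calc mDerivξ (List.ofFn r) g ξ
        = dirDξ (r 0) (mDerivξ (List.ofFn fun j : Fin n => r j.succ) g) ξ := by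
          rw [List.ofFn_succ]
          rfl
      _ = fderiv ℝ (fun η => iteratedFDeriv ℝ n g η fun j => Pi.single (r j.succ) 1) ξ
            (Pi.single (r 0) 1) := by
          rw [dirDξ, funext (ih fun j => r j.succ)]
      _ = iteratedFDeriv ℝ (n + 1) g ξ fun j => Pi.single (r j) 1 := by
          rw [iteratedFDeriv_succ_apply_left, fderiv_continuousMultilinear_apply_const_apply hd]
          rfl

lemma norm_mDerivξ_le {g : Vec d → ℂ} (hg : ContDiff ℝ ∞ g) (l : List (Fin d)) (ξ : Vec d) :
    ‖mDerivξ l g ξ‖ ≤ ‖iteratedFDeriv ℝ l.length g ξ‖ := by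
  calc ‖mDerivξ l g ξ‖
      = ‖iteratedFDeriv ℝ l.length g ξ fun j => Pi.single (l.get j) 1‖ := by
        rw [← mDerivξ_ofFn hg, List.ofFn_get]
    _ ≤ ‖iteratedFDeriv ℝ l.length g ξ‖ := by
        refine ((iteratedFDeriv ℝ l.length g ξ).le_opNorm _).trans_eq ?_
        simp [Pi.norm_single]

lemma norm_iteratedFDeriv_le_sum_mDerivξ {g : Vec d → ℂ} (hg : ContDiff ℝ ∞ g) (n : ℕ)
    (ξ : Vec d) :
    ‖iteratedFDeriv ℝ n g ξ‖ ≤ ∑ r : Fin n → Fin d, ‖mDerivξ (List.ofFn r) g ξ‖ := by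
  simpa only [mDerivξ_ofFn hg] using norm_continuousMultilinearMap_le_sum_single _

/-- The partial Fourier coefficient `f̃(k, ξ)` of a function on phase space. -/
def fCoeffX (f : Phase d → ℂ) (k : Fin d → ℤ) (ξ : Vec d) : ℂ :=
  fCoeff (fun x => f (x, ξ)) k

lemma norm_fCoeffX_le {f : Phase d → ℂ} {C : ℝ} (h : ∀ p, ‖f p‖ ≤ C) (k : Fin d → ℤ)
    (ξ : Vec d) : ‖fCoeffX f k ξ‖ ≤ C :=
  norm_fCoeff_le (fun x => h (x, ξ)) k

-- Differentiating in `q.1` as well lets the derivatives in `x` of the coefficient be read off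
-- from translation covariance, without integrating by parts.
lemma exists_hasFDerivAt_fCoeff_translate {f : Phase d → ℂ} (hf : ContDiff ℝ 1 f)
    (k : Fin d → ℤ) (q : Phase d) :
    ∃ L : Phase d →L[ℝ] ℂ,
      HasFDerivAt (fun q : Phase d => fCoeff (fun x => f (x + q.1, q.2)) k) L q ∧
        ∀ v, L v = fCoeff (fun x => dirD v f (x + q.1, q.2)) k := by
  let D (x : Vec d) (q : Phase d) : Phase d →L[ℝ] ℂ :=
    fourierKernel k x • fderiv ℝ f (x + q.1, q.2)
  have hfc : Continuous f := hf.continuous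
  have : Continuous (fderiv ℝ f) := hf.continuous_fderiv one_ne_zero
  have integrand_deriv (x : Vec d) (q : Phase d) :
      HasFDerivAt (fun q : Phase d => fourierKernel k x * f (x + q.1, q.2)) (D x q) q := by
    have translate (q : Phase d) : (x + q.1, q.2) = ((x, 0) : Phase d) + q :=
      Prod.ext rfl (zero_add q.2).symm
    simp only [D, translate]
    have h : HasFDerivAt f (fderiv ℝ f ((x, 0) + q)) ((x, 0) + q) :=
      (hf.differentiable one_ne_zero).differentiableAt.hasFDerivAt
    exact ((hasFDerivAt_comp_add_left (x, 0)).2 h).const_mul _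
  have D_integrable : IntegrableOn (fun x => D x q) (Set.Icc 0 fun _ => 2 * Real.pi) :=
    Continuous.integrableOn_Icc (by fun_prop)
  refine ⟨((2 * Real.pi : ℂ) ^ d)⁻¹ • ∫ x in Set.Icc (0 : Vec d) fun _ => 2 * Real.pi, D x q,
    HasFDerivAt.const_mul (hasFDerivAt_setIntegral_of_continuous isCompact_Icc measurableSet_Icc
      (fun q => by fun_prop) (by fun_prop) integrand_deriv q) _, fun v => ?_⟩
  rw [smul_apply, ContinuousLinearMap.integral_apply D_integrable]
  rfl

lemma exists_hasFDerivAt_fCoeffX {f : Phase d → ℂ} (hf : ContDiff ℝ 1 f) (k : Fin d → ℤ)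
    (ξ : Vec d) :
    ∃ L : Vec d →L[ℝ] ℂ, HasFDerivAt (fCoeffX f k) L ξ ∧
      ∀ w, L w = fCoeffX (dirD (0, w) f) k ξ := by
  obtain ⟨L, hL, hLv⟩ := exists_hasFDerivAt_fCoeff_translate hf k (0, ξ)
  refine ⟨L.comp (.inr ℝ _ _), ?_, fun w => ?_⟩
  · have h := hL.comp ξ (hasFDerivAt_prodMk_right 0 ξ)
    simp only [Function.comp_def, add_zero] at h
    exact h
  · have h := hLv (0, w)
    simp only [add_zero] at h
    exact h

lemma differentiable_fCoeffX {f : Phase d → ℂ} (hf : ContDiff ℝ 1 f) (k : Fin d → ℤ) :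
    Differentiable ℝ (fCoeffX f k) := fun ξ =>
  let ⟨_, hL, _⟩ := exists_hasFDerivAt_fCoeffX hf k ξ
  hL.differentiableAt

lemma fderiv_fCoeffX_apply {f : Phase d → ℂ} (hf : ContDiff ℝ 1 f) (k : Fin d → ℤ)
    (ξ w : Vec d) : fderiv ℝ (fCoeffX f k) ξ w = fCoeffX (dirD (0, w) f) k ξ := by
  obtain ⟨L, hL, hLw⟩ := exists_hasFDerivAt_fCoeffX hf k ξ
  rw [hL.fderiv, hLw]

lemma contDiff_fCoeffX {f : Phase d → ℂ} (hf : ContDiff ℝ ∞ f) (k : Fin d → ℤ) :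
    ContDiff ℝ ∞ (fCoeffX f k) := by
  refine contDiff_infty.2 fun n => ?_
  induction n generalizing f with
  | zero => exact contDiff_zero.2 (differentiable_fCoeffX (hf.of_le (by simp)) k).continuous
  | succ n ih =>
    have hf1 : ContDiff ℝ 1 f := hf.of_le (by simp)
    rw [Nat.cast_add, Nat.cast_one]
    refine contDiff_succ_iff_fderiv_apply.2
      ⟨differentiable_fCoeffX hf1 k, fun h => absurd h (by exact WithTop.coe_ne_top), fun w => ?_⟩
    simpa only [fderiv_fCoeffX_apply hf1] using ih (contDiff_dirD hf (0, w))

lemma hasDerivAt_fourierKernel_smul (k : Fin d → ℤ) (v : Vec d) :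
    HasDerivAt (fun t : ℝ => fourierKernel k (-(t • v)))
      (Complex.I * ∑ i, (k i : ℂ) * v i) 0 := by
  have exponent (t : ℝ) : fourierKernel k (-(t • v)) =
      Complex.exp (t * (Complex.I * ∑ i, (k i : ℂ) * v i)) := by
    rw [fourierKernel]
    congr 1
    push_cast
    simp only [Pi.neg_apply, Pi.smul_apply, smul_eq_mul, Complex.ofReal_neg, Complex.ofReal_mul,
      Finset.mul_sum, ← Finset.sum_neg_distrib]
    exact Finset.sum_congr rfl fun i _ => by ring
  simp only [exponent]
  simpa using ((Complex.ofRealCLM.hasDerivAt (x := 0)).mul_const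
    (Complex.I * ∑ i, (k i : ℂ) * v i)).cexp

lemma fCoeffX_dirD_x {f : Phase d → ℂ} (hf : ContDiff ℝ 1 f) (hper : PeriodicX f)
    (k : Fin d → ℤ) (v ξ : Vec d) :
    fCoeffX (dirD (v, 0) f) k ξ = (Complex.I * ∑ i, (k i : ℂ) * v i) * fCoeffX f k ξ := by
  have hfc : Continuous f := hf.continuous
  have covariance (t : ℝ) : fCoeff (fun x => f (x + t • v, ξ)) k =
      fourierKernel k (-(t • v)) * fCoeffX f k ξ :=
    fCoeff_comp_add_right (g := fun x => f (x, ξ)) (by fun_prop) (fun x n => hper x ξ n) k (t • v)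
  obtain ⟨L, hL, hLv⟩ := exists_hasFDerivAt_fCoeff_translate hf k (0, ξ)
  have line : HasDerivAt (fun t : ℝ => ((t • v, ξ) : Phase d)) (v, 0) 0 := by
    simpa using ((hasDerivAt_id (0 : ℝ)).smul_const v).prodMk (hasDerivAt_const 0 ξ)
  have deriv_left := HasFDerivAt.comp_hasDerivAt_of_eq 0 hL line (by simp)
  simp only [Function.comp_def, covariance, hLv, add_zero] at deriv_left
  exact deriv_left.unique ((hasDerivAt_fourierKernel_smul k v).mul_const _)

lemma fCoeffX_mDeriv_nil {f : Phase d → ℂ} (hf : ContDiff ℝ ∞ f) (lξ : List (Fin d))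
    (k : Fin d → ℤ) : fCoeffX (mDeriv [] lξ f) k = mDerivξ lξ (fCoeffX f k) := by
  induction lξ with
  | nil => rfl
  | cons i l ih =>
    funext ξ
    calc fCoeffX (mDeriv [] (i :: l) f) k ξ
        = dirDξ i (fCoeffX (mDeriv [] l f) k) ξ :=
          (fderiv_fCoeffX_apply ((contDiff_mDeriv hf [] l).of_le (by simp)) k ξ _).symm
      _ = mDerivξ (i :: l) (fCoeffX f k) ξ := by
          rw [ih]
          rfl

lemma fCoeffX_mDeriv {f : Phase d → ℂ} (hf : ContDiff ℝ ∞ f) (hper : PeriodicX f)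
    (lx lξ : List (Fin d)) (k : Fin d → ℤ) (ξ : Vec d) :
    fCoeffX (mDeriv lx lξ f) k ξ =
      (lx.map fun i => Complex.I * (k i : ℂ)).prod * mDerivξ lξ (fCoeffX f k) ξ := by
  induction lx with
  | nil => rw [fCoeffX_mDeriv_nil hf, List.map_nil, List.prod_nil, one_mul]
  | cons i l ih =>
    have single_sum : ∑ j, (k j : ℂ) * (Pi.single i 1 : Vec d) j = k i := by
      simp [Pi.single_apply, apply_ite Complex.ofReal]
    calc fCoeffX (mDeriv (i :: l) lξ f) k ξ
        = Complex.I * k i * fCoeffX (mDeriv l lξ f) k ξ := by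
          rw [← single_sum]
          exact fCoeffX_dirD_x ((contDiff_mDeriv hf l lξ).of_le (by simp))
            (periodicX_mDeriv hper l lξ) k (Pi.single i 1) ξ
      _ = ((i :: l).map fun i => Complex.I * (k i : ℂ)).prod * mDerivξ lξ (fCoeffX f k) ξ := by
          rw [ih, List.map_cons, List.prod_cons]
          ring

end SymbolDerivatives

section SymbolCoefficients

variable {d : ℕ} {δ m : ℝ}

/-- The description of the class `Ψ_δ^m` by Fourier coefficients: `a h k` is smooth, each of its
derivatives decays faster than every power of `|k|`, and the `n`-th one costs `h^{m - δ n}`. -/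
structure HasSymbolCoeffs (δ m : ℝ) (a : ℝ → (Fin d → ℤ) → Vec d → ℂ) : Prop where
  contDiff : ∀ h ∈ Set.Ioc (0 : ℝ) 1, ∀ k, ContDiff ℝ ∞ (a h k)
  exists_bound : ∀ N n : ℕ, ∃ C, 0 ≤ C ∧ ∀ h ∈ Set.Ioc (0 : ℝ) 1, ∀ k ξ,
    max 1 ‖k‖ ^ N * ‖iteratedFDeriv ℝ n (a h k) ξ‖ ≤ C * h ^ (m - δ * n)

/-- A Fourier multiplier of type `δ`: real symbols `ψ h k`, smooth in `ξ`, whose `n`-th derivative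
is `O(h^{-δ n})` uniformly in the frequency `k`. -/
structure IsMultiplier (δ : ℝ) (ψ : ℝ → (Fin d → ℤ) → Vec d → ℝ) : Prop where
  contDiff : ∀ h ∈ Set.Ioc (0 : ℝ) 1, ∀ k, ContDiff ℝ ∞ (ψ h k)
  exists_bound : ∀ n : ℕ, ∃ C, 0 ≤ C ∧ ∀ h ∈ Set.Ioc (0 : ℝ) 1, ∀ k ξ,
    ‖iteratedFDeriv ℝ n (ψ h k) ξ‖ ≤ C * h ^ (-(δ * n))

lemma HasSymbolCoeffs.congr {a b : ℝ → (Fin d → ℤ) → Vec d → ℂ} (ha : HasSymbolCoeffs δ m a)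
    (hab : ∀ h ∈ Set.Ioc (0 : ℝ) 1, ∀ k, b h k = a h k) : HasSymbolCoeffs δ m b where
  contDiff h hh k := by
    rw [hab h hh k]
    exact ha.contDiff h hh k
  exists_bound N n := by
    obtain ⟨C, hC, bound⟩ := ha.exists_bound N n
    refine ⟨C, hC, fun h hh k ξ => ?_⟩
    rw [hab h hh k]
    exact bound h hh k ξ

lemma IsSymbol.exists_max_one_norm_pow_mul_norm_mDerivξ_le {P : ℝ → Phase d → ℂ}
    (hP : IsSymbol d δ m P) (hper : ∀ h ∈ Set.Ioc (0 : ℝ) 1, PeriodicX (P h)) (N : ℕ)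
    (l : List (Fin d)) :
    ∃ C, 0 ≤ C ∧ ∀ h ∈ Set.Ioc (0 : ℝ) 1, ∀ k ξ,
      max 1 ‖k‖ ^ N * ‖mDerivξ l (fCoeffX (P h) k) ξ‖ ≤ C * h ^ (m - δ * l.length) := by
  obtain ⟨C₀, hC₀, bound₀⟩ := hP.2 [] l
  choose C hC bound using fun i : Fin d => hP.2 (List.replicate N i) l
  have sum_nonneg : 0 ≤ ∑ i, C i := Finset.sum_nonneg fun i _ => (hC i).le
  refine ⟨C₀ + ∑ i, C i, by positivity, fun h hh k ξ => ?_⟩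
  have coeff_le : ‖mDerivξ l (fCoeffX (P h) k) ξ‖ ≤ C₀ * h ^ (m - δ * l.length) := by
    rw [← fCoeffX_mDeriv_nil (hP.1 h hh)]
    exact norm_fCoeffX_le (bound₀ h hh) k ξ
  have coord_pow_mul_coeff_le (i : Fin d) :
      ‖k i‖ ^ N * ‖mDerivξ l (fCoeffX (P h) k) ξ‖ ≤ C i * h ^ (m - δ * l.length) := by
    have hi := norm_fCoeffX_le (bound i h hh) k ξ
    rwa [fCoeffX_mDeriv (hP.1 h hh) (hper h hh), List.map_replicate, List.prod_replicate, norm_mul,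
      norm_pow, norm_mul, Complex.norm_I, one_mul, Complex.norm_intCast, ← Int.norm_eq_abs] at hi
  calc max 1 ‖k‖ ^ N * ‖mDerivξ l (fCoeffX (P h) k) ξ‖
      ≤ (1 + ∑ i, ‖k i‖ ^ N) * ‖mDerivξ l (fCoeffX (P h) k) ξ‖ := by
        gcongr
        exact max_one_norm_pow_le_one_add_sum k N
    _ = ‖mDerivξ l (fCoeffX (P h) k) ξ‖ +
          ∑ i, ‖k i‖ ^ N * ‖mDerivξ l (fCoeffX (P h) k) ξ‖ := by
        rw [add_mul, one_mul, Finset.sum_mul]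
    _ ≤ C₀ * h ^ (m - δ * l.length) + ∑ i, C i * h ^ (m - δ * l.length) :=
        add_le_add coeff_le (Finset.sum_le_sum fun i _ => coord_pow_mul_coeff_le i)
    _ = (C₀ + ∑ i, C i) * h ^ (m - δ * l.length) := by rw [add_mul, Finset.sum_mul]

lemma IsSymbol.hasSymbolCoeffs {P : ℝ → Phase d → ℂ} (hP : IsSymbol d δ m P)
    (hper : ∀ h ∈ Set.Ioc (0 : ℝ) 1, PeriodicX (P h)) :
    HasSymbolCoeffs δ m fun h => fCoeffX (P h) where
  contDiff h hh k := contDiff_fCoeffX (hP.1 h hh) k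
  exists_bound N n := by
    choose C hC bound using fun r : Fin n → Fin d =>
      hP.exists_max_one_norm_pow_mul_norm_mDerivξ_le hper N (List.ofFn r)
    refine ⟨∑ r, C r, Finset.sum_nonneg fun r _ => hC r, fun h hh k ξ => ?_⟩
    simp only [List.length_ofFn] at bound
    calc max 1 ‖k‖ ^ N * ‖iteratedFDeriv ℝ n (fCoeffX (P h) k) ξ‖
        ≤ max 1 ‖k‖ ^ N * ∑ r : Fin n → Fin d, ‖mDerivξ (List.ofFn r) (fCoeffX (P h) k) ξ‖ := by
          gcongr
          exact norm_iteratedFDeriv_le_sum_mDerivξ (contDiff_fCoeffX (hP.1 h hh) k) n ξ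
      _ ≤ (∑ r, C r) * h ^ (m - δ * n) := by
          rw [Finset.mul_sum, Finset.sum_mul]
          exact Finset.sum_le_sum fun r _ => bound r h hh k ξ

lemma norm_prod_map_I_mul_le (l : List (Fin d)) (k : Fin d → ℤ) :
    ‖(l.map fun i => Complex.I * (k i : ℂ)).prod‖ ≤ max 1 ‖k‖ ^ l.length := by
  induction l with
  | nil => simp
  | cons i l ih =>
    rw [List.map_cons, List.prod_cons, norm_mul, List.length_cons, pow_succ']
    gcongr
    rw [norm_mul, Complex.norm_I, one_mul, Complex.norm_intCast, ← Int.norm_eq_abs]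
    exact (norm_le_pi_norm k i).trans (le_max_right _ _)

lemma HasSymbolCoeffs.isSymbol {P : ℝ → Phase d → ℂ}
    (hP : ∀ h ∈ Set.Ioc (0 : ℝ) 1, ContDiff ℝ ∞ (P h))
    (hper : ∀ h ∈ Set.Ioc (0 : ℝ) 1, PeriodicX (P h))
    (ha : HasSymbolCoeffs δ m fun h => fCoeffX (P h)) : IsSymbol d δ m P := by
  refine ⟨hP, fun lx lξ => ?_⟩
  obtain ⟨C, hC, bound⟩ := ha.exists_bound (lx.length + (d + 1)) lξ.length
  have summable_weight : Summable fun k : Fin d → ℤ => (max 1 ‖k‖ ^ (d + 1))⁻¹ :=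
    summable_inv_max_one_norm_pow (by simp)
  set S := ∑' k : Fin d → ℤ, (max 1 ‖k‖ ^ (d + 1))⁻¹
  have : 0 ≤ S := tsum_nonneg fun k => by positivity
  refine ⟨C * S + 1, by positivity, fun h hh ⟨x, ξ⟩ => ?_⟩
  have hcont : Continuous (mDeriv lx lξ (P h)) := (contDiff_mDeriv (hP h hh) lx lξ).continuous
  have coeff_le (k : Fin d → ℤ) : ‖fCoeffX (mDeriv lx lξ (P h)) k ξ‖ ≤
      C * h ^ (m - δ * lξ.length) * (max 1 ‖k‖ ^ (d + 1))⁻¹ := by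
    rw [← div_eq_mul_inv, le_div_iff₀ (by positivity), fCoeffX_mDeriv (hP h hh) (hper h hh),
      norm_mul]
    calc _ ≤ max 1 ‖k‖ ^ lx.length * ‖iteratedFDeriv ℝ lξ.length (fCoeffX (P h) k) ξ‖ *
          max 1 ‖k‖ ^ (d + 1) := by
          gcongr
          · exact norm_prod_map_I_mul_le lx k
          · exact norm_mDerivξ_le (ha.contDiff h hh k) lξ ξ
      _ = max 1 ‖k‖ ^ (lx.length + (d + 1)) *
          ‖iteratedFDeriv ℝ lξ.length (fCoeffX (P h) k) ξ‖ := by ring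
      _ ≤ C * h ^ (m - δ * lξ.length) := bound h hh k ξ
  have h_pow_nonneg : 0 ≤ h ^ (m - δ * lξ.length) := Real.rpow_nonneg hh.1.le _
  calc ‖mDeriv lx lξ (P h) (x, ξ)‖
      ≤ ∑' k, C * h ^ (m - δ * lξ.length) * (max 1 ‖k‖ ^ (d + 1))⁻¹ :=
        norm_le_tsum_of_norm_fCoeff_le (g := fun x => mDeriv lx lξ (P h) (x, ξ)) (by fun_prop)
          (fun x k => periodicX_mDeriv (hper h hh) lx lξ x ξ k) (summable_weight.mul_left _)
          coeff_le x
    _ = C * S * h ^ (m - δ * lξ.length) := by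
        rw [tsum_mul_left]
        ring
    _ ≤ (C * S + 1) * h ^ (m - δ * lξ.length) := by
        gcongr
        exact le_add_of_nonneg_right zero_le_one

lemma HasSymbolCoeffs.smul {ψ : ℝ → (Fin d → ℤ) → Vec d → ℝ}
    {a : ℝ → (Fin d → ℤ) → Vec d → ℂ} (ha : HasSymbolCoeffs δ m a) (hψ : IsMultiplier δ ψ) :
    HasSymbolCoeffs δ m fun h k ξ => ψ h k ξ • a h k ξ where
  contDiff h hh k := (hψ.contDiff h hh k).smul (ha.contDiff h hh k)
  exists_bound N n := by
    choose B hB boundψ using hψ.exists_bound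
    choose C hC bounda using ha.exists_bound N
    refine ⟨∑ i ∈ Finset.range (n + 1), n.choose i * B i * C (n - i),
      Finset.sum_nonneg fun i _ => mul_nonneg (mul_nonneg (by positivity) (hB i)) (hC _),
      fun h hh k ξ => ?_⟩
    have rpow_split (i : ℕ) (hi : i ∈ Finset.range (n + 1)) :
        h ^ (-(δ * i)) * h ^ (m - δ * (n - i : ℕ)) = h ^ (m - δ * n) := by
      rw [← Real.rpow_add hh.1, Nat.cast_sub (Finset.mem_range_succ_iff.1 hi)]
      congr 1
      ring
    have term_le (i : ℕ) (hi : i ∈ Finset.range (n + 1)) :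
        max 1 ‖k‖ ^ N * (n.choose i * ‖iteratedFDeriv ℝ i (ψ h k) ξ‖ *
          ‖iteratedFDeriv ℝ (n - i) (a h k) ξ‖) ≤
            n.choose i * B i * C (n - i) * h ^ (m - δ * n) := by
      calc _ = n.choose i * (‖iteratedFDeriv ℝ i (ψ h k) ξ‖ *
            (max 1 ‖k‖ ^ N * ‖iteratedFDeriv ℝ (n - i) (a h k) ξ‖)) := by ring
        _ ≤ n.choose i * (B i * h ^ (-(δ * i)) * (C (n - i) * h ^ (m - δ * (n - i : ℕ)))) := by
            refine mul_le_mul_of_nonneg_left (mul_le_mul (boundψ i h hh k ξ)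
              (bounda (n - i) h hh k ξ) (by positivity) ?_) (Nat.cast_nonneg _)
            exact mul_nonneg (hB i) (Real.rpow_nonneg hh.1.le _)
        _ = n.choose i * B i * C (n - i) * h ^ (m - δ * n) := by
            rw [← rpow_split i hi]
            ring
    calc max 1 ‖k‖ ^ N * ‖iteratedFDeriv ℝ n (fun ξ => ψ h k ξ • a h k ξ) ξ‖
        ≤ max 1 ‖k‖ ^ N * ∑ i ∈ Finset.range (n + 1), n.choose i *
            ‖iteratedFDeriv ℝ i (ψ h k) ξ‖ * ‖iteratedFDeriv ℝ (n - i) (a h k) ξ‖ := by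
          gcongr
          exact norm_iteratedFDeriv_smul_le (hψ.contDiff h hh k) (ha.contDiff h hh k) ξ
            (by exact_mod_cast le_top)
      _ ≤ (∑ i ∈ Finset.range (n + 1), n.choose i * B i * C (n - i)) * h ^ (m - δ * n) := by
          rw [Finset.mul_sum, Finset.sum_mul]
          exact Finset.sum_le_sum term_le

end SymbolCoefficients

section Average

variable {d : ℕ} {δ m : ℝ} {H : Vec d → ℝ} {χ : ℝ → ℝ}

/-- The Fourier multiplier `χ(Ω_k(ξ) / (|k| h^δ))` of the `h^δ`-average, set to `1` at `k = 0`. -/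
def avgMultiplier (H : Vec d → ℝ) (χ : ℝ → ℝ) (δ h : ℝ) (k : Fin d → ℤ) (ξ : Vec d) : ℝ :=
  if k = 0 then 1 else χ (Om H ξ (zr k) / (znorm k * h ^ δ))

/-- The functional `p ↦ p(k) / (|k| h^δ)`, which sends `dH_ξ` to the argument of `χ` in
`avgMultiplier`. -/
def scaledEval (δ h : ℝ) (k : Fin d → ℤ) : (Vec d →L[ℝ] ℝ) →L[ℝ] ℝ :=
  (znorm k * h ^ δ)⁻¹ • ContinuousLinearMap.apply ℝ ℝ (zr k)

lemma norm_zr_le_znorm (k : Fin d → ℤ) : ‖zr k‖ ≤ znorm k :=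
  (pi_norm_le_iff_of_nonneg (Real.sqrt_nonneg _)).2 fun i => Real.abs_le_sqrt
    (Finset.single_le_sum (f := fun i => (k i : ℝ) ^ 2) (fun _ _ => sq_nonneg _)
      (Finset.mem_univ i))

lemma norm_scaledEval_le {h : ℝ} (hh : 0 < h) (k : Fin d → ℤ) :
    ‖scaledEval δ h k‖ ≤ h ^ (-δ) := by
  have z_nonneg : 0 ≤ znorm k := Real.sqrt_nonneg _
  refine ContinuousLinearMap.opNorm_le_bound _ (Real.rpow_nonneg hh.le _) fun p => ?_
  calc ‖scaledEval δ h k p‖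
      = (znorm k * h ^ δ)⁻¹ * ‖p (zr k)‖ := by
        change ‖(znorm k * h ^ δ)⁻¹ * p (zr k)‖ = _
        rw [norm_mul, Real.norm_of_nonneg (by positivity)]
    _ ≤ (znorm k * h ^ δ)⁻¹ * (‖p‖ * znorm k) := by
        gcongr
        exact p.le_opNorm_of_le (norm_zr_le_znorm k)
    _ = h ^ (-δ) * ‖p‖ * ((znorm k)⁻¹ * znorm k) := by
        rw [Real.rpow_neg hh.le, mul_inv]
        ring
    _ ≤ h ^ (-δ) * ‖p‖ :=
        mul_le_of_le_one_right (by positivity) (inv_mul_le_one_of_le₀ le_rfl z_nonneg)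

lemma avgMultiplier_zero (h : ℝ) : avgMultiplier H χ δ h 0 = fun _ => 1 :=
  funext fun _ => if_pos rfl

lemma avgMultiplier_of_ne {k : Fin d → ℤ} (hk : k ≠ 0) (h : ℝ) :
    avgMultiplier H χ δ h k = fun ξ => χ (scaledEval δ h k (fderiv ℝ H ξ)) :=
  funext fun _ => (if_neg hk).trans (congrArg χ (div_eq_inv_mul _ _))

lemma isMultiplier_avgMultiplier (hδ : 0 ≤ δ) (hH : ContDiff ℝ ∞ H)
    (hH' : HasBoundedDerivs (fderiv ℝ H)) (hχ : ContDiff ℝ ∞ χ) (hχb : HasBoundedDerivs χ) :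
    IsMultiplier δ (avgMultiplier H χ δ) where
  contDiff h _ k := by
    rcases eq_or_ne k 0 with rfl | hk
    · rw [avgMultiplier_zero]
      exact contDiff_const
    · rw [avgMultiplier_of_ne hk]
      exact hχ.comp ((scaledEval δ h k).contDiff.comp (hH.fderiv_right (by simp)))
  exists_bound n := by
    obtain ⟨C, hC, bound⟩ := exists_norm_iteratedFDeriv_comp_clm_comp_le hχ hχb
      (hH.fderiv_right (m := ∞) (by simp)) hH' n
    refine ⟨1 + C, by positivity, fun h hh k ξ => ?_⟩
    have one_le : 1 ≤ h ^ (-δ) :=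
      Real.one_le_rpow_of_pos_of_le_one_of_nonpos hh.1 hh.2 (neg_nonpos.2 hδ)
    have rpow_eq : h ^ (-(δ * n)) = (h ^ (-δ)) ^ n := by
      rw [← neg_mul, Real.rpow_mul hh.1.le, Real.rpow_natCast]
    rw [rpow_eq]
    rcases eq_or_ne k 0 with rfl | hk
    · have const_le : ‖iteratedFDeriv ℝ n (fun _ : Vec d => (1 : ℝ)) ξ‖ ≤ 1 := by
        cases n with
        | zero => simp
        | succ n => simp [iteratedFDeriv_const_of_ne]
      rw [avgMultiplier_zero]
      exact const_le.trans
        (one_le_mul_of_one_le_of_one_le (le_add_of_nonneg_right hC) (one_le_pow₀ one_le))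
    · rw [avgMultiplier_of_ne hk]
      refine (bound (scaledEval δ h k) _ one_le (norm_scaledEval_le hh.1 k) ξ).trans ?_
      gcongr
      exact le_add_of_nonneg_left zero_le_one

lemma CutOff.hasBoundedDerivs (hχ : CutOff χ) : HasBoundedDerivs χ :=
  .of_hasCompactSupport hχ.smooth <| .intro (isCompact_Icc (a := -1) (b := 1)) fun t ht =>
    hχ.supp t (by
      contrapose! ht
      exact abs_le.1 ht.le)

lemma IsHAverage.fCoeffX_eq {K A : ℝ → Phase d → ℂ} (hA : IsHAverage H χ δ K A) {h : ℝ}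
    (hh : h ∈ Set.Ioc (0 : ℝ) 1) (k : Fin d → ℤ) :
    fCoeffX (A h) k = fun ξ => avgMultiplier H χ δ h k ξ • fCoeffX (K h) k ξ := by
  funext ξ
  rw [fCoeffX, hA.2.2 h hh k ξ, avgMultiplier]
  split_ifs with hk
  · rw [one_smul, hk, fCoeffX]
  · rw [Complex.real_smul, fCoeffX]

end Average

theorem stmt8_general {d : ℕ} {m δ : ℝ} (hδ : 0 ≤ δ) {H : Vec d → ℝ} (hH : ContDiff ℝ ∞ H)
    (hH' : HasBoundedDerivs (fderiv ℝ H)) {χ : ℝ → ℝ} (hχ : ContDiff ℝ ∞ χ)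
    (hχb : HasBoundedDerivs χ) {K : ℝ → Phase d → ℂ} (hK : IsSymbol d δ m K)
    (hKper : ∀ h ∈ Set.Ioc (0 : ℝ) 1, PeriodicX (K h)) {A : ℝ → Phase d → ℂ}
    (hA : IsHAverage H χ δ K A) : IsSymbol d δ m A := by
  have product : HasSymbolCoeffs δ m fun h k ξ => avgMultiplier H χ δ h k ξ • fCoeffX (K h) k ξ :=
    (hK.hasSymbolCoeffs hKper).smul (isMultiplier_avgMultiplier hδ hH hH' hχ hχb)
  have average : HasSymbolCoeffs δ m fun h => fCoeffX (A h) :=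
    product.congr fun h hh k => hA.fCoeffX_eq hh k
  exact average.isSymbol hA.1 hA.2.1

/-- the `ℏ^δ`-average of a symbol `K_ℏ ∈ Ψ_δ^m` is again in `Ψ_δ^m`. -/
theorem stmt8 (d : ℕ) (m δ : ℝ) (hδ : 0 < δ)
    (H : Vec d → ℝ) (hH : ContDiff ℝ (⊤ : ℕ∞) H) (hHb : BddDerivs H)
    (χ : ℝ → ℝ) (hχ : CutOff χ)
    (K : ℝ → Phase d → ℂ) (hK : IsSymbol d δ m K)
    (hKper : ∀ h ∈ Set.Ioc (0:ℝ) 1, PeriodicX (K h))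
    (A : ℝ → Phase d → ℂ) (hA : IsHAverage H χ δ K A) :
    IsSymbol d δ m A := by
  have hHb' : HasBoundedDerivs H := hHb
  exact stmt8_general hδ.le hH hHb'.fderiv hχ.smooth hχ.hasBoundedDerivs hK hKper hA
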